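/- arXiv:2504.12615 — 7 statements merged into one kernel-verified Lean document; each statement's English description precedes it below -/
import Mathlib

section
/- (Identifiability) Let λ_1,…,λ_p and λ'_1,…,λ'_p be positive reals each satisfying λ_{a+1} = λ_{p−a+1} for 1 ≤ a ≤ ⌊(p−1)/2⌋ and ∏_{k=1}^p λ_k = 1 = ∏_{k=1}^p λ'_k, and let α, α' ∈ (0,∞)^p. If D_α (Q D_λ Q*) D_α = D_{α'} (Q D_{λ'} Q*) D_{α'}, then α = α' and λ = λ'. -/
open Matrix Complex

/-- A scaled Vandermonde matrix in the powers of a primitive root of unity is invertible. -/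
theorem isUnit_of_eq_pow_div {p : ℕ} {ω : ℂ} (hω : IsPrimitiveRoot ω p) {c : ℂ} (hc : c ≠ 0)
    {Q : Matrix (Fin p) (Fin p) ℂ} (hQ : ∀ j k : Fin p, Q j k = ω ^ ((j : ℕ) * (k : ℕ)) / c) :
    IsUnit Q := by
  have hQv : Q = c⁻¹ • Matrix.vandermonde (fun j : Fin p => ω ^ (j : ℕ)) := by
    ext j k
    rw [hQ, Matrix.smul_apply, Matrix.vandermonde_apply, ← pow_mul, smul_eq_mul, div_eq_inv_mul]
  rw [Matrix.isUnit_iff_isUnit_det, isUnit_iff_ne_zero, hQv, Matrix.det_smul]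
  refine mul_ne_zero (pow_ne_zero _ (inv_ne_zero hc)) (Matrix.det_vandermonde_ne_zero_iff.2 ?_)
  intro a b hab
  exact Fin.ext (hω.pow_inj a.2 b.2 hab)

/-- If all entries of `Q` have the same modulus, then `Q D_l Qᴴ` has constant diagonal. -/
theorem mul_diagonal_mul_conjTranspose_apply_self {ι : Type*} [Fintype ι] [DecidableEq ι]
    {Q : Matrix ι ι ℂ} {c : ℝ} (hQ : ∀ j k, Complex.normSq (Q j k) = c) (l : ι → ℝ) (i : ι) :
    (Q * Matrix.diagonal (fun k => (l k : ℂ)) * Qᴴ) i i = ((c * ∑ k, l k : ℝ) : ℂ) := by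
  rw [Matrix.mul_apply, Finset.mul_sum, Complex.ofReal_sum]
  refine Finset.sum_congr rfl fun k _ => ?_
  rw [Matrix.mul_diagonal, Matrix.conjTranspose_apply, mul_right_comm, ← starRingEnd_apply,
    Complex.mul_conj, hQ, Complex.ofReal_mul]

/-- Identifiability: under the reality condition `λ_{a+1} = λ_{p-a+1}` (0-based:
`λ_a = λ_{p-a}`) and the normalization `∏_k λ_k = 1`, the parameters `α` and `λ`
are identifiable from `Σ = D_α (Q D_λ Qᴴ) D_α`. -/
theorem stmt_5 (p : ℕ) (hp : 2 ≤ p)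
    (ω : ℂ) (hω : ω = Complex.exp (2 * Real.pi * Complex.I / p))
    (Q : Matrix (Fin p) (Fin p) ℂ)
    (hQ : ∀ j k : Fin p, Q j k = ω ^ ((j : ℕ) * (k : ℕ)) / Real.sqrt p)
    (lam lam' : Fin p → ℝ) (hlam : ∀ k, 0 < lam k) (hlam' : ∀ k, 0 < lam' k)
    (hsym : ∀ (a : ℕ) (ha : 1 ≤ a) (ha' : a ≤ (p - 1) / 2),
      lam ⟨a, by omega⟩ = lam ⟨p - a, by omega⟩)
    (hsym' : ∀ (a : ℕ) (ha : 1 ≤ a) (ha' : a ≤ (p - 1) / 2),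
      lam' ⟨a, by omega⟩ = lam' ⟨p - a, by omega⟩)
    (hprod : ∏ k : Fin p, lam k = 1) (hprod' : ∏ k : Fin p, lam' k = 1)
    (α α' : Fin p → ℝ) (hα : ∀ i, 0 < α i) (hα' : ∀ i, 0 < α' i)
    (heq :
      Matrix.diagonal (fun i => (α i : ℂ)) *
          (Q * Matrix.diagonal (fun k => (lam k : ℂ)) * Qᴴ) *
          Matrix.diagonal (fun i => (α i : ℂ)) =
        Matrix.diagonal (fun i => (α' i : ℂ)) *
          (Q * Matrix.diagonal (fun k => (lam' k : ℂ)) * Qᴴ) *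
          Matrix.diagonal (fun i => (α' i : ℂ))) :
    α = α' ∧ lam = lam' := by
  have hp0 : (0 : ℝ) < p := by exact_mod_cast (by omega : 0 < p)
  have hprim : IsPrimitiveRoot ω p := hω ▸ Complex.isPrimitiveRoot_exp p (by omega)
  have hQu : IsUnit Q := isUnit_of_eq_pow_div hprim
    (Complex.ofReal_ne_zero.2 (Real.sqrt_pos.2 hp0).ne') hQ
  have hnorm : ∀ j k, Complex.normSq (Q j k) = (p : ℝ)⁻¹ := fun j k => by
    rw [hQ, Complex.normSq_eq_norm_sq, norm_div, norm_pow, hprim.norm'_eq_one (by omega), one_pow,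
      Complex.norm_real, Real.norm_of_nonneg (Real.sqrt_nonneg _), div_pow,
      Real.sq_sqrt hp0.le, one_pow, one_div]
  have hentry : ∀ i j, (α i : ℂ) * (Q * Matrix.diagonal (fun k => (lam k : ℂ)) * Qᴴ) i j * α j =
      α' i * (Q * Matrix.diagonal (fun k => (lam' k : ℂ)) * Qᴴ) i j * α' j := fun i j => by
    have h := congrFun (congrFun heq i) j
    rwa [Matrix.mul_diagonal, Matrix.diagonal_mul, Matrix.mul_diagonal, Matrix.diagonal_mul] at h
  have : NeZero p := ⟨by omega⟩
  have hs : 0 < ∑ k, lam k := Finset.sum_pos (fun k _ => hlam k) Finset.univ_nonempty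
  have hs' : 0 < ∑ k, lam' k := Finset.sum_pos (fun k _ => hlam' k) Finset.univ_nonempty
  set c : ℝ := √((∑ k, lam' k) / ∑ k, lam k)
  have hc0 : 0 < c := Real.sqrt_pos.2 (div_pos hs' hs)
  have hc2 : c ^ 2 = (∑ k, lam' k) / ∑ k, lam k := Real.sq_sqrt (div_pos hs' hs).le
  have hαc : ∀ i, α i = c * α' i := fun i => by
    have h := hentry i i
    rw [mul_diagonal_mul_conjTranspose_apply_self hnorm,
      mul_diagonal_mul_conjTranspose_apply_self hnorm] at h
    norm_cast at h
    rw [← pow_left_inj₀ (hα i).le (mul_pos hc0 (hα' i)).le two_ne_zero, mul_pow, hc2]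
    field_simp at h ⊢
    linarith
  have hlamc : ∀ k, lam' k = c ^ 2 * lam k := by
    have hC : Q * Matrix.diagonal (fun k => ((c ^ 2 * lam k : ℝ) : ℂ)) * Qᴴ =
        Q * Matrix.diagonal (fun k => (lam' k : ℂ)) * Qᴴ := by
      have hd : Matrix.diagonal (fun k => ((c ^ 2 * lam k : ℝ) : ℂ)) =
          ((c ^ 2 : ℝ) : ℂ) • Matrix.diagonal (fun k => (lam k : ℂ)) := by
        rw [← Matrix.diagonal_smul]
        congr 1
        ext k
        simp
      rw [hd, Matrix.mul_smul, Matrix.smul_mul]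
      ext i j
      have h := hentry i j
      have hi : (α' i : ℂ) ≠ 0 := Complex.ofReal_ne_zero.2 (hα' i).ne'
      have hj : (α' j : ℂ) ≠ 0 := Complex.ofReal_ne_zero.2 (hα' j).ne'
      rw [hαc i, hαc j] at h
      refine mul_left_cancel₀ hi (mul_right_cancel₀ hj (Eq.trans ?_ h))
      rw [Matrix.smul_apply, smul_eq_mul]
      push_cast
      ring
    have hD := hQu.mul_left_cancel (hQu.star.mul_right_cancel hC)
    intro k
    exact_mod_cast (congrFun (Matrix.diagonal_injective hD) k).symm
  have hc1 : c = 1 := by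
    have h : (c ^ 2) ^ p = 1 := by
      simpa [hlamc, Finset.prod_mul_distrib, hprod] using hprod'
    rw [← pow_mul] at h
    exact (pow_eq_one_iff_of_nonneg hc0.le (by omega)).1 h
  exact ⟨funext fun i => by rw [hαc, hc1, one_mul],
    funext fun k => by rw [hlamc, hc1, one_pow, one_mul]⟩
end

section
/- The Hadamard product of R = Q D_λ Q* and its inverse diagonalizes in the Fourier basis: R ∘ R^{−1} = Q diag(μ_1,…,μ_p) Q*; equivalently, r_{ij} r^{ij} = ∑_{m=1}^p q_{im} q̄_{jm} μ_m for all i,j, where r_{ij}, r^{ij} are the entries of R and R^{−1}. -/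
open Matrix Complex

/-- Entries of a matrix conjugated by a diagonal one. -/
theorem mul_diagonal_mul_conjTranspose_apply {n : Type*} [Fintype n] [DecidableEq n]
    (Q : Matrix n n ℂ) (a : n → ℂ) (i j : n) :
    (Q * Matrix.diagonal a * Qᴴ) i j = ∑ k, Q i k * (starRingEnd ℂ) (Q j k) * a k := by
  rw [Matrix.mul_apply]
  refine Finset.sum_congr rfl fun k _ => ?_
  rw [Matrix.mul_diagonal, Matrix.conjTranspose_apply, starRingEnd_apply]
  ring

/-- For a unitary `Q`, the matrices `Q diag(a) Qᴴ` and `Q diag(a⁻¹) Qᴴ` are inverse. -/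
theorem inv_mul_diagonal_mul_conjTranspose {n : Type*} [Fintype n] [DecidableEq n]
    {Q : Matrix n n ℂ} (hQ : Q * Qᴴ = 1) {a : n → ℂ} (ha : ∀ k, a k ≠ 0) :
    (Q * Matrix.diagonal a * Qᴴ)⁻¹ = Q * Matrix.diagonal (fun k => (a k)⁻¹) * Qᴴ := by
  have hQ' : Qᴴ * Q = 1 := mul_eq_one_comm.mp hQ
  apply Matrix.inv_eq_right_inv
  calc Q * Matrix.diagonal a * Qᴴ * (Q * Matrix.diagonal (fun k => (a k)⁻¹) * Qᴴ)
      = Q * Matrix.diagonal a * (Qᴴ * Q) * Matrix.diagonal (fun k => (a k)⁻¹) * Qᴴ := by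
        simp only [Matrix.mul_assoc]
    _ = 1 := by
        rw [hQ', Matrix.mul_one, Matrix.mul_assoc Q, Matrix.diagonal_mul_diagonal]
        simp [ha, hQ]

/-- A nontrivial `p`-th root of unity has vanishing power sum. -/
theorem sum_fin_pow_eq_zero {p : ℕ} {z : ℂ} (hz : z ^ p = 1) (hz1 : z ≠ 1) :
    ∑ k : Fin p, z ^ (k : ℕ) = 0 := by
  rw [Fin.sum_univ_eq_sum_range (fun k => z ^ k), geom_sum_eq hz1, hz, sub_self, zero_div]

/-- The product of two power sums of a `p`-th root of unity, grouped by exponent mod `p`. -/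
theorem sum_fin_pow_mul_sum_fin_pow {p : ℕ} (hp : 0 < p) {z : ℂ} (hz : z ^ p = 1)
    (a b : Fin p → ℂ) :
    (∑ k : Fin p, z ^ (k : ℕ) * a k) * (∑ l : Fin p, z ^ (l : ℕ) * b l) =
      ∑ m : Fin p, z ^ (m : ℕ) * ∑ kl ∈ Finset.univ.filter
        (fun kl : Fin p × Fin p => ((kl.1 : ℕ) + (kl.2 : ℕ)) % p = (m : ℕ)),
        a kl.1 * b kl.2 := by
  rw [Finset.sum_mul_sum, ← Finset.sum_product', Finset.univ_product_univ,
    ← Finset.sum_fiberwise (s := Finset.univ)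
      (g := fun kl : Fin p × Fin p => (⟨(kl.1 + kl.2 : ℕ) % p, Nat.mod_lt _ hp⟩ : Fin p))]
  refine Finset.sum_congr rfl fun m _ => ?_
  rw [Finset.mul_sum]
  refine Finset.sum_congr (by ext; simp [Fin.ext_iff]) fun kl hkl => ?_
  have hm : ((kl.1 : ℕ) + (kl.2 : ℕ)) % p = (m : ℕ) := by simpa using hkl
  rw [← hm, ← pow_eq_pow_mod _ hz, pow_add]
  ring

/-- The Hadamard product `R ∘ R⁻¹` for `R = Q D_λ Qᴴ` diagonalizes in the Fourier
basis: `R ∘ R⁻¹ = Q diag(μ) Qᴴ`, i.e. `r_{ij} r^{ij} = ∑_m q_{im} q̄_{jm} μ_m`,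
where `μ_m = (1/p) ∑_{(k,l) ∈ S_m} λ_k λ_l⁻¹` (indices written 0-based, so the
congruence `k+l-1 ≡ m (mod p)` becomes `k+l ≡ m (mod p)`). -/
theorem stmt_8 (p : ℕ) (hp : 2 ≤ p)
    (ω : ℂ) (hω : ω = Complex.exp (2 * Real.pi * Complex.I / p))
    (Q : Matrix (Fin p) (Fin p) ℂ)
    (hQ : ∀ j k : Fin p, Q j k = ω ^ ((j : ℕ) * (k : ℕ)) / Real.sqrt p)
    (lam : Fin p → ℝ) (hlam : ∀ k, 0 < lam k)
    (R : Matrix (Fin p) (Fin p) ℂ)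
    (hR : R = Q * Matrix.diagonal (fun k => (lam k : ℂ)) * Qᴴ)
    (μ : Fin p → ℝ)
    (hμ : ∀ m : Fin p, μ m = (1 / p : ℝ) *
      ∑ kl ∈ Finset.univ.filter
        (fun kl : Fin p × Fin p => ((kl.1 : ℕ) + (kl.2 : ℕ)) % p = (m : ℕ)),
        lam kl.1 * (lam kl.2)⁻¹) :
    Matrix.hadamard R R⁻¹ = Q * Matrix.diagonal (fun m => (μ m : ℂ)) * Qᴴ ∧
    ∀ i j : Fin p,
      R i j * R⁻¹ i j = ∑ m : Fin p, Q i m * (starRingEnd ℂ) (Q j m) * (μ m : ℂ) := by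
  have hp0 : p ≠ 0 := by omega
  have hpC : (p : ℂ) ≠ 0 := Nat.cast_ne_zero.mpr hp0
  have hprim : IsPrimitiveRoot ω p := hω ▸ Complex.isPrimitiveRoot_exp p hp0
  have hω0 : ω ≠ 0 := hprim.ne_zero hp0
  have hconj : (starRingEnd ℂ) ω = ω⁻¹ :=
    (Complex.inv_eq_conj (hprim.norm'_eq_one hp0)).symm
  have hsqrt : ((Real.sqrt p : ℝ) : ℂ) * (Real.sqrt p : ℝ) = p := by
    rw [← Complex.ofReal_mul, Real.mul_self_sqrt p.cast_nonneg, Complex.ofReal_natCast]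
  set z : Fin p → Fin p → ℂ := fun i j => ω ^ (i : ℕ) * (ω ^ (j : ℕ))⁻¹ with hz
  have hzp : ∀ i j, z i j ^ p = 1 := fun i j => by
    simp only [hz]
    rw [mul_pow, inv_pow, pow_right_comm, pow_right_comm ω j, hprim.pow_eq_one]
    simp
  have hQQ : ∀ i j k, Q i k * (starRingEnd ℂ) (Q j k) = z i j ^ (k : ℕ) / p := fun i j k => by
    rw [hQ, hQ, map_div₀, map_pow, hconj, Complex.conj_ofReal, div_mul_div_comm, hsqrt]
    simp only [hz]
    rw [mul_pow, inv_pow, inv_pow, pow_mul, pow_mul]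
  have hentry : ∀ (a : Fin p → ℂ) i j, (Q * Matrix.diagonal a * Qᴴ) i j =
      (∑ k : Fin p, z i j ^ (k : ℕ) * a k) / p := fun a i j => by
    rw [mul_diagonal_mul_conjTranspose_apply, Finset.sum_div]
    refine Finset.sum_congr rfl fun k _ => ?_
    rw [hQQ]
    ring
  have hunit : Q * Qᴴ = 1 := by
    ext i j
    have h := hentry (fun _ => 1) i j
    rw [Matrix.diagonal_one, Matrix.mul_one] at h
    simp only [mul_one] at h
    rw [h]
    by_cases hij : i = j
    · subst hij
      simp [hz, hω0, hpC]
    · rw [sum_fin_pow_eq_zero (hzp i j), zero_div, Matrix.one_apply_ne hij]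
      intro h1
      exact hij (Fin.ext (hprim.pow_inj i.2 j.2
        ((mul_inv_eq_one₀ (pow_ne_zero _ hω0)).mp h1)))
  have hinv : R⁻¹ = Q * Matrix.diagonal (fun k => (lam k : ℂ)⁻¹) * Qᴴ := by
    rw [hR]
    exact inv_mul_diagonal_mul_conjTranspose hunit
      fun k => Complex.ofReal_ne_zero.mpr (hlam k).ne'
  have hmain : ∀ i j, R i j * R⁻¹ i j = (Q * Matrix.diagonal (fun m => (μ m : ℂ)) * Qᴴ) i j := by
    intro i j
    rw [hinv, hR, hentry, hentry, hentry, div_mul_div_comm,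
      sum_fin_pow_mul_sum_fin_pow (by omega) (hzp i j), ← div_div]
    congr 1
    rw [Finset.sum_div]
    refine Finset.sum_congr rfl fun m _ => ?_
    rw [hμ]
    push_cast
    ring
  refine ⟨Matrix.ext hmain, fun i j => ?_⟩
  rw [hmain, mul_diagonal_mul_conjTranspose_apply]
end

section
/- For R = Q D_λ Q*, the determinant identity det( I_p + R ∘ R^{−1} ) = ∏_{m=1}^p (1 + μ_m) holds, where ∘ denotes the Hadamard (entrywise) product. -/
open Matrix Complex

/-- Entries of `Q D Qᴴ` for the normalized Fourier matrix `Q` of a unimodular number. -/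
theorem fourier_conj_diagonal_apply {p : ℕ} {ω : ℂ} (hω : star ω = ω⁻¹)
    {Q : Matrix (Fin p) (Fin p) ℂ}
    (hQ : ∀ j k : Fin p, Q j k = ω ^ ((j : ℕ) * (k : ℕ)) / Real.sqrt p)
    (d : Fin p → ℂ) (j k : Fin p) :
    (Q * diagonal d * Qᴴ) j k =
      (1 / p : ℂ) * ∑ a : Fin p, d a * (ω ^ (j : ℕ) * (ω ^ (k : ℕ))⁻¹) ^ (a : ℕ) := by
  have hs : ((Real.sqrt p : ℝ) : ℂ) * ((Real.sqrt p : ℝ) : ℂ) = p := by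
    rw [← Complex.ofReal_mul, Real.mul_self_sqrt (Nat.cast_nonneg p), Complex.ofReal_natCast]
  rw [Matrix.mul_apply, Finset.mul_sum]
  refine Finset.sum_congr rfl fun a _ => ?_
  have hstar : star (Q k a) = (ω ^ ((k : ℕ) * (a : ℕ)))⁻¹ / Real.sqrt p := by
    rw [hQ, star_div₀, star_pow, hω, inv_pow]
    congr 1
    exact Complex.conj_ofReal _
  rw [mul_diagonal, conjTranspose_apply, hstar, hQ, ← hs, mul_pow, inv_pow, ← pow_mul, ← pow_mul]
  simp only [div_eq_mul_inv, mul_inv]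
  ring

/-- The normalized Fourier matrix of a primitive root of unity is unitary. -/
theorem fourier_mul_conjTranspose {p : ℕ} {ω : ℂ} (hprim : IsPrimitiveRoot ω p)
    (hω : star ω = ω⁻¹) {Q : Matrix (Fin p) (Fin p) ℂ}
    (hQ : ∀ j k : Fin p, Q j k = ω ^ ((j : ℕ) * (k : ℕ)) / Real.sqrt p) :
    Q * Qᴴ = 1 := by
  ext j k
  have hp : p ≠ 0 := (Fin.pos j).ne'
  have hω0 : ω ≠ 0 := hprim.ne_zero hp
  have h := fourier_conj_diagonal_apply hω hQ (fun _ => 1) j k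
  rw [diagonal_one, Matrix.mul_one] at h
  rw [h]
  simp only [one_mul]
  rw [Fin.sum_univ_eq_sum_range (fun a => (ω ^ (j : ℕ) * (ω ^ (k : ℕ))⁻¹) ^ a)]
  by_cases hjk : j = k
  · subst hjk
    have hpc : (p : ℂ) ≠ 0 := Nat.cast_ne_zero.mpr hp
    simp [mul_inv_cancel₀ (pow_ne_zero (j : ℕ) hω0), hpc]
  · have hz : ω ^ (j : ℕ) * (ω ^ (k : ℕ))⁻¹ ≠ 1 := fun hz =>
      hjk (Fin.ext (hprim.pow_inj j.2 k.2
        ((mul_inv_eq_one₀ (pow_ne_zero _ hω0)).mp hz)))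
    rw [geom_sum_eq hz, one_apply_ne hjk, mul_pow, inv_pow, ← pow_mul, ← pow_mul,
      mul_comm (j : ℕ), mul_comm (k : ℕ), pow_mul, pow_mul, hprim.pow_eq_one]
    simp

/-- The Hadamard product of two matrices diagonalized by the Fourier matrix is diagonalized by it
too, the eigenvalues being the normalized cyclic convolution. -/
theorem fourier_hadamard {p : ℕ} {ω : ℂ} (hpow : ω ^ p = 1)
    (hω : star ω = ω⁻¹) {Q : Matrix (Fin p) (Fin p) ℂ}
    (hQ : ∀ j k : Fin p, Q j k = ω ^ ((j : ℕ) * (k : ℕ)) / Real.sqrt p)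
    (d e : Fin p → ℂ) :
    (Q * diagonal d * Qᴴ).hadamard (Q * diagonal e * Qᴴ) =
      Q * diagonal (fun m : Fin p => (1 / p : ℂ) *
        ∑ kl ∈ Finset.univ.filter
          (fun kl : Fin p × Fin p => ((kl.1 : ℕ) + (kl.2 : ℕ)) % p = (m : ℕ)),
          d kl.1 * e kl.2) * Qᴴ := by
  ext j k
  rw [hadamard_apply]
  simp only [fourier_conj_diagonal_apply hω hQ]
  set z := ω ^ (j : ℕ) * (ω ^ (k : ℕ))⁻¹ with hz
  have hzp : z ^ p = 1 := by
    rw [hz, mul_pow, inv_pow, ← pow_mul, ← pow_mul, mul_comm (j : ℕ), mul_comm (k : ℕ),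
      pow_mul, pow_mul, hpow]
    simp
  have hp : 0 < p := Fin.pos j
  rw [mul_mul_mul_comm, Finset.sum_mul_sum, ← Finset.sum_product', mul_assoc]
  congr 1
  rw [Finset.univ_product_univ, Finset.mul_sum,
    ← Finset.sum_fiberwise (s := Finset.univ)
      (g := fun kl : Fin p × Fin p => (⟨((kl.1 : ℕ) + kl.2) % p, Nat.mod_lt _ hp⟩ : Fin p))]
  refine Finset.sum_congr rfl fun m _ => ?_
  simp only [Fin.ext_iff]
  rw [Finset.mul_sum, Finset.sum_mul]
  refine Finset.sum_congr rfl fun kl hkl => ?_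
  have hm : z ^ (m : ℕ) = z ^ (kl.1 : ℕ) * z ^ (kl.2 : ℕ) := by
    rw [← (Finset.mem_filter.mp hkl).2, ← pow_add, ← pow_eq_pow_mod _ hzp]
  rw [hm]
  ring

/-- Determinant identity `det(I_p + R ∘ R⁻¹) = ∏_m (1 + μ_m)` for `R = Q D_λ Qᴴ`,
where `∘` is the Hadamard product and `μ_m = (1/p) ∑_{(k,l) ∈ S_m} λ_k λ_l⁻¹`
(indices written 0-based). -/
theorem stmt_10 (p : ℕ) (hp : 2 ≤ p)
    (ω : ℂ) (hω : ω = Complex.exp (2 * Real.pi * Complex.I / p))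
    (Q : Matrix (Fin p) (Fin p) ℂ)
    (hQ : ∀ j k : Fin p, Q j k = ω ^ ((j : ℕ) * (k : ℕ)) / Real.sqrt p)
    (lam : Fin p → ℝ) (hlam : ∀ k, 0 < lam k)
    (R : Matrix (Fin p) (Fin p) ℂ)
    (hR : R = Q * Matrix.diagonal (fun k => (lam k : ℂ)) * Qᴴ)
    (μ : Fin p → ℝ)
    (hμ : ∀ m : Fin p, μ m = (1 / p : ℝ) *
      ∑ kl ∈ Finset.univ.filter
        (fun kl : Fin p × Fin p => ((kl.1 : ℕ) + (kl.2 : ℕ)) % p = (m : ℕ)),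
        lam kl.1 * (lam kl.2)⁻¹) :
    (1 + Matrix.hadamard R R⁻¹).det = ∏ m : Fin p, (1 + (μ m : ℂ)) := by
  have hp0 : p ≠ 0 := by omega
  have hprim : IsPrimitiveRoot ω p := hω ▸ Complex.isPrimitiveRoot_exp p hp0
  have hstar : star ω = ω⁻¹ :=
    (Complex.inv_eq_conj (hprim.norm'_eq_one hp0)).symm
  have hQQ : Q * Qᴴ = 1 := fourier_mul_conjTranspose hprim hstar hQ
  have hQQ' : Qᴴ * Q = 1 := mul_eq_one_comm.mp hQQ
  have hRinv : R⁻¹ = Q * diagonal (fun k => ((lam k : ℂ))⁻¹) * Qᴴ := by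
    apply inv_eq_right_inv
    calc R * (Q * diagonal (fun k => ((lam k : ℂ))⁻¹) * Qᴴ)
        = Q * diagonal (fun k => (lam k : ℂ)) * (Qᴴ * Q) *
            diagonal (fun k => ((lam k : ℂ))⁻¹) * Qᴴ := by
          rw [hR]; simp only [Matrix.mul_assoc]
      _ = Q * (diagonal (fun k => (lam k : ℂ)) * diagonal (fun k => ((lam k : ℂ))⁻¹)) * Qᴴ := by
          rw [hQQ', Matrix.mul_one]; simp only [Matrix.mul_assoc]
      _ = 1 := by
          have h (k : Fin p) : (lam k : ℂ) * (lam k : ℂ)⁻¹ = 1 :=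
            mul_inv_cancel₀ (Complex.ofReal_ne_zero.mpr (hlam k).ne')
          simp only [diagonal_mul_diagonal, h, diagonal_one, Matrix.mul_one, hQQ]
  have hH : R.hadamard R⁻¹ = Q * diagonal (fun m => (μ m : ℂ)) * Qᴴ := by
    rw [hRinv, hR, fourier_hadamard hprim.pow_eq_one hstar hQ]
    simp only [hμ]
    push_cast
    rfl
  have hsum : 1 + R.hadamard R⁻¹ = Q * diagonal (fun m => 1 + (μ m : ℂ)) * Qᴴ := by
    rw [hH, ← diagonal_add, Matrix.mul_add, Matrix.add_mul, diagonal_one, Matrix.mul_one, hQQ]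
  rw [hsum, det_mul_right_comm, hQQ, Matrix.one_mul, det_diagonal]
end

section
/- (Strict convexity of the log-determinant of g_β) Suppose log λ_k(θ) = ∑_{i=1}^d c_i^k θ_i is linear in θ ∈ ℝ^d with ∑_{k=1}^p c_i^k = 0 for each i, and the d vectors (c_i^1,…,c_i^p), i = 1,…,d, are linearly independent. Then the function F(θ) = ∑_{m=1}^p log( 1 + μ_m(θ) ), where μ_m(θ) = (1/p) ∑_{(k,l)∈S_m} λ_k(θ) λ_l(θ)^{−1}, has positive definite Hessian at every θ ∈ ℝ^d; in particular F is strictly convex. -/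
/-- The partition function `1 + a ∑ exp (x_e + t y_e)` of a line of exponential weights. -/
noncomputable def lineSumExp {ι : Type*} (S : Finset ι) (a : ℝ) (x y : ι → ℝ) (t : ℝ) : ℝ :=
  1 + a * ∑ e ∈ S, Real.exp (x e + t * y e)

/-- The second logarithmic derivative of `lineSumExp`, i.e. the variance of the slopes `y`. -/
noncomputable def lineSumExpVar {ι : Type*} (S : Finset ι) (a : ℝ) (x y : ι → ℝ) (t : ℝ) : ℝ :=
  ((a * ∑ e ∈ S, Real.exp (x e + t * y e) * y e * y e) * lineSumExp S a x y t -
    (a * ∑ e ∈ S, Real.exp (x e + t * y e) * y e) ^ 2) / lineSumExp S a x y t ^ 2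

section LineSumExp

variable {ι : Type*} (S : Finset ι) {a : ℝ} (x y : ι → ℝ) (t : ℝ)

theorem lineSumExp_pos (ha : 0 ≤ a) : 0 < lineSumExp S a x y t := by
  unfold lineSumExp
  positivity

theorem hasDerivAt_exp_line (u w : ℝ) :
    HasDerivAt (fun s => Real.exp (u + s * w)) (Real.exp (u + t * w) * w) t := by
  simpa using (((hasDerivAt_id t).mul_const w).const_add u).exp

theorem hasDerivAt_lineSumExp :
    HasDerivAt (lineSumExp S a x y) (a * ∑ e ∈ S, Real.exp (x e + t * y e) * y e) t :=
  ((HasDerivAt.fun_sum fun e _ => hasDerivAt_exp_line t (x e) (y e)).const_mul a).const_add 1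

theorem hasDerivAt_log_lineSumExp (ha : 0 ≤ a) :
    HasDerivAt (fun s => Real.log (lineSumExp S a x y s))
      ((a * ∑ e ∈ S, Real.exp (x e + t * y e) * y e) / lineSumExp S a x y t) t :=
  (hasDerivAt_lineSumExp S x y t).log (lineSumExp_pos S x y t ha).ne'

theorem hasDerivAt_lineSumExpVar (ha : 0 ≤ a) :
    HasDerivAt (fun s => (a * ∑ e ∈ S, Real.exp (x e + s * y e) * y e) / lineSumExp S a x y s)
      (lineSumExpVar S a x y t) t := by
  have h := (((HasDerivAt.fun_sum (u := S) fun e _ =>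
    (hasDerivAt_exp_line t (x e) (y e)).mul_const (y e)).const_mul a).fun_div
      (hasDerivAt_lineSumExp S x y t) (lineSumExp_pos S x y t ha).ne')
  rwa [← pow_two] at h

theorem sq_sum_exp_mul_le :
    (∑ e ∈ S, Real.exp (x e + t * y e) * y e) ^ 2 ≤
      (∑ e ∈ S, Real.exp (x e + t * y e)) * ∑ e ∈ S, Real.exp (x e + t * y e) * y e * y e :=
  Finset.sum_sq_le_sum_mul_sum_of_sq_le_mul S (fun _ _ => (Real.exp_pos _).le)
    (fun e _ => by rw [mul_assoc]; exact mul_nonneg (Real.exp_pos _).le (mul_self_nonneg _))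
    (fun e _ => (by ring : _ = _).le)

/-- The variance of the slopes is bounded below by the contribution of the constant term `1`. -/
theorem le_lineSumExpVar :
    (a * ∑ e ∈ S, Real.exp (x e + t * y e) * y e * y e) / lineSumExp S a x y t ^ 2 ≤
      lineSumExpVar S a x y t := by
  unfold lineSumExpVar
  refine div_le_div_of_nonneg_right ?_ (sq_nonneg _)
  have h := mul_le_mul_of_nonneg_left (sq_sum_exp_mul_le S x y t) (sq_nonneg a)
  rw [lineSumExp]
  linarith

theorem lineSumExpVar_nonneg (ha : 0 ≤ a) : 0 ≤ lineSumExpVar S a x y t :=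
  (div_nonneg (mul_nonneg ha (Finset.sum_nonneg fun e _ => by
    rw [mul_assoc]; exact mul_nonneg (Real.exp_pos _).le (mul_self_nonneg _)))
    (sq_nonneg _)).trans (le_lineSumExpVar S x y t)

theorem lineSumExpVar_pos (ha : 0 < a) {e : ι} (he : e ∈ S) (hy : y e ≠ 0) :
    0 < lineSumExpVar S a x y t := by
  refine lt_of_lt_of_le (div_pos (mul_pos ha ?_) (pow_pos (lineSumExp_pos S x y t ha.le) 2))
    (le_lineSumExpVar S x y t)
  refine Finset.sum_pos' (fun e _ => ?_) ⟨e, he, ?_⟩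
  · rw [mul_assoc]; exact mul_nonneg (Real.exp_pos _).le (mul_self_nonneg _)
  · rw [mul_assoc]; exact mul_pos (Real.exp_pos _) (mul_self_pos.mpr hy)

end LineSumExp

section Lines

variable {E : Type*} [NormedAddCommGroup E] [NormedSpace ℝ E] {F : E → ℝ}

theorem hasDerivAt_add_smul (θ v : E) (t : ℝ) : HasDerivAt (fun s : ℝ => θ + s • v) v t := by
  simpa using ((hasDerivAt_id t).smul_const v).const_add θ

/-- The quadratic form of the Hessian is the second derivative along a line. -/
theorem fderiv_fderiv_eq_deriv_deriv_line (hF : ContDiff ℝ 2 F) (θ v : E) :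
    fderiv ℝ (fun θ' => fderiv ℝ F θ' v) θ v =
      deriv (deriv fun t : ℝ => F (θ + t • v)) 0 := by
  have h1 : (deriv fun t : ℝ => F (θ + t • v)) = fun t : ℝ => fderiv ℝ F (θ + t • v) v := by
    funext t
    exact ((hF.differentiable (by norm_num) _).hasFDerivAt.comp_hasDerivAt t
      (hasDerivAt_add_smul θ v t)).deriv
  have hd : Differentiable ℝ fun θ' => fderiv ℝ F θ' v :=
    ((hF.fderiv_right (m := 1) (by norm_num)).differentiable (by norm_num)).clm_apply
      (differentiable_const v)
  rw [h1]
  have h := (hd (θ + (0 : ℝ) • v)).hasFDerivAt.comp_hasDerivAt 0 (hasDerivAt_add_smul θ v 0)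
  rw [zero_smul, add_zero] at h
  exact h.deriv.symm

/-- A function that is strictly convex along every line is strictly convex. -/
theorem strictConvexOn_univ_of_lines
    (h : ∀ θ v : E, v ≠ 0 → StrictConvexOn ℝ Set.univ fun t : ℝ => F (θ + t • v)) :
    StrictConvexOn ℝ Set.univ F := by
  refine ⟨convex_univ, fun x _ y _ hxy a b ha hb hab => ?_⟩
  have := (h x (y - x) (sub_ne_zero.mpr hxy.symm)).2 (Set.mem_univ 0) (Set.mem_univ 1)
    zero_ne_one ha hb hab
  have e : x + b • (y - x) = a • x + b • y := by
    rw [eq_sub_of_add_eq hab]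
    module
  simpa [e] using this

end Lines

theorem sum_sum_fderiv_single_eq {d : ℕ} {F : (Fin d → ℝ) → ℝ} (hF : ContDiff ℝ 2 F)
    (θ v : Fin d → ℝ) :
    ∑ i : Fin d, ∑ j : Fin d, v i * v j *
        fderiv ℝ (fun θ' => fderiv ℝ F θ' (Pi.single j 1)) θ (Pi.single i 1) =
      fderiv ℝ (fun θ' => fderiv ℝ F θ' v) θ v := by
  have hd : DifferentiableAt ℝ (fderiv ℝ F) θ :=
    (hF.fderiv_right (m := 1) (by norm_num)).differentiable (by norm_num) θ
  have key : ∀ u w : Fin d → ℝ,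
      fderiv ℝ (fun θ' => fderiv ℝ F θ' u) θ w = fderiv ℝ (fderiv ℝ F) θ w u := by
    intro u w
    rw [fderiv_clm_apply hd (differentiableAt_const u)]
    simp
  simp only [key]
  have hv : v = ∑ i, v i • (Pi.single i 1 : Fin d → ℝ) := by
    simpa using (pi_eq_sum_univ' v)
  conv_rhs => rw [hv]
  simp only [map_sum, map_smul, sum_apply, smul_apply,
    smul_eq_mul, Finset.mul_sum]
  rw [Finset.sum_comm]
  refine Finset.sum_congr rfl fun i _ => Finset.sum_congr rfl fun j _ => by ring

/-- The linear forms `∑ i, c i k * v i` cannot all agree unless `v = 0`. -/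
theorem exists_linear_forms_ne {p d : ℕ} (hp : 0 < p) {c : Fin d → Fin p → ℝ}
    (hc0 : ∀ i, ∑ k : Fin p, c i k = 0) (hindep : LinearIndependent ℝ c)
    {v : Fin d → ℝ} (hv : v ≠ 0) :
    ∃ k l : Fin p, ∑ i, c i k * v i - ∑ i, c i l * v i ≠ 0 := by
  by_contra! h
  have hsum : ∑ k : Fin p, ∑ i, c i k * v i = 0 := by
    rw [Finset.sum_comm]
    simp [← Finset.sum_mul, hc0]
  have hzero : ∀ l : Fin p, ∑ i, c i l * v i = 0 := by
    intro l
    simp only [fun k => sub_eq_zero.mp (h k l), Finset.sum_const, Finset.card_univ,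
      Fintype.card_fin, nsmul_eq_mul] at hsum
    exact (mul_eq_zero.mp hsum).resolve_left (by positivity)
  refine hv (funext (Fintype.linearIndependent_iff.mp hindep v ?_))
  funext l
  simpa [Finset.sum_apply, mul_comm] using hzero l

/-- Strict convexity of `F(θ) = log det(I + R(θ) ∘ R(θ)⁻¹) = ∑_m log(1 + μ_m(θ))`
for the log-linear family `log λ_k(θ) = ∑_i c_i^k θ_i` with `∑_k c_i^k = 0` and
linearly independent rows `c_i`: the Hessian of `F` is positive definite at every
`θ`, and `F` is strictly convex. -/
theorem stmt_12 (p d : ℕ) (hp : 2 ≤ p) (hd : 1 ≤ d) (hdp : d ≤ p)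
    (c : Fin d → Fin p → ℝ)
    (hc0 : ∀ i, ∑ k : Fin p, c i k = 0)
    (hindep : LinearIndependent ℝ c)
    (lam : (Fin d → ℝ) → Fin p → ℝ)
    (hlam : ∀ θ k, lam θ k = Real.exp (∑ i : Fin d, c i k * θ i))
    (F : (Fin d → ℝ) → ℝ)
    (hF : ∀ θ, F θ = ∑ m : Fin p, Real.log (1 + (1 / p : ℝ) *
      ∑ kl ∈ Finset.univ.filter
        (fun kl : Fin p × Fin p => ((kl.1 : ℕ) + (kl.2 : ℕ)) % p = (m : ℕ)),
        lam θ kl.1 * (lam θ kl.2)⁻¹)) :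
    (∀ (θ : Fin d → ℝ) (v : Fin d → ℝ), v ≠ 0 →
      0 < ∑ i : Fin d, ∑ j : Fin d, v i * v j *
        fderiv ℝ (fun θ' => fderiv ℝ F θ' (Pi.single j 1)) θ (Pi.single i 1)) ∧
    StrictConvexOn ℝ Set.univ F := by
  have hp0 : 0 < p := by omega
  have ha : (0 : ℝ) < 1 / p := by positivity
  set S : Fin p → Finset (Fin p × Fin p) := fun m => Finset.univ.filter
    (fun kl : Fin p × Fin p => ((kl.1 : ℕ) + (kl.2 : ℕ)) % p = (m : ℕ)) with hS
  set Y : (Fin d → ℝ) → Fin p × Fin p → ℝ :=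
    fun v kl => ∑ i, c i kl.1 * v i - ∑ i, c i kl.2 * v i with hY
  have hFY : ∀ θ, F θ = ∑ m, Real.log (1 + (1 / p : ℝ) * ∑ kl ∈ S m, Real.exp (Y θ kl)) := by
    intro θ
    simp only [hF, hlam, hS, hY, Real.exp_sub, div_eq_mul_inv]
  have hFC : ContDiff ℝ 2 F := by
    rw [funext hFY]
    refine ContDiff.sum fun m _ => ContDiff.log ?_ fun θ => by positivity
    simp only [hY]
    fun_prop
  have hline : ∀ θ v : Fin d → ℝ, (fun t : ℝ => F (θ + t • v)) =
      fun t => ∑ m, Real.log (lineSumExp (S m) (1 / p) (Y θ) (Y v) t) := by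
    intro θ v
    funext t
    have hYt : ∀ kl, Y (θ + t • v) kl = Y θ kl + t * Y v kl := by
      intro kl
      simp only [hY, Pi.add_apply, Pi.smul_apply, smul_eq_mul, mul_add, Finset.sum_add_distrib,
        mul_left_comm _ t, ← Finset.mul_sum]
      ring
    simp only [hFY, hYt, lineSumExp]
  have hsecond : ∀ (θ v : Fin d → ℝ) (t : ℝ), deriv (deriv fun t : ℝ => F (θ + t • v)) t =
      ∑ m, lineSumExpVar (S m) (1 / p) (Y θ) (Y v) t := by
    intro θ v t
    have hfirst : deriv (fun t => ∑ m, Real.log (lineSumExp (S m) (1 / p) (Y θ) (Y v) t)) =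
        fun s => ∑ m, (1 / p * ∑ e ∈ S m, Real.exp (Y θ e + s * Y v e) * Y v e) /
          lineSumExp (S m) (1 / p) (Y θ) (Y v) s :=
      funext fun s => (HasDerivAt.fun_sum fun m _ =>
        hasDerivAt_log_lineSumExp (S m) (Y θ) (Y v) s ha.le).deriv
    rw [hline, hfirst]
    exact (HasDerivAt.fun_sum fun m _ =>
      hasDerivAt_lineSumExpVar (S m) (Y θ) (Y v) t ha.le).deriv
  have hpos : ∀ (θ v : Fin d → ℝ) (t : ℝ), v ≠ 0 →
      0 < deriv (deriv fun t : ℝ => F (θ + t • v)) t := by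
    intro θ v t hv
    rw [hsecond]
    obtain ⟨k, l, hkl⟩ := exists_linear_forms_ne hp0 hc0 hindep hv
    exact Finset.sum_pos' (fun m _ => lineSumExpVar_nonneg _ _ _ _ ha.le)
      ⟨⟨((k : ℕ) + l) % p, Nat.mod_lt _ hp0⟩, Finset.mem_univ _,
        lineSumExpVar_pos _ _ _ _ ha (e := (k, l)) (by simp [hS]) hkl⟩
  refine ⟨fun θ v hv => ?_, strictConvexOn_univ_of_lines fun θ v hv => ?_⟩
  · rw [sum_sum_fderiv_single_eq hFC, fderiv_fderiv_eq_deriv_deriv_line hFC]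
    exact hpos θ v 0 hv
  · refine strictConvexOn_univ_of_deriv2_pos ?_ fun t => hpos θ v t hv
    have := hFC.continuous
    fun_prop
end

section
/- (Superharmonicity of the shrinkage prior ratio) Under the hypotheses that log λ_k(θ) = ∑_{i=1}^d c_i^k θ_i with ∑_{k=1}^p c_i^k = 0 for each i and the vectors (c_i^k)_{k=1}^p, i = 1,…,d, linearly independent, let F(θ) = ∑_{m=1}^p log(1 + μ_m(θ)) and let G be any constant symmetric positive definite d×d matrix with inverse entries G^{ij}. Then the function f(θ) = exp(−F(θ)/2) satisfies ∑_{i,j=1}^d G^{ij} ( ∂_i ∂_j f + (1/2)(∂_i F)(∂_j f) ) < 0 at every θ ∈ ℝ^d. -/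
section LogSumExp

variable {E ι : Type*} [NormedAddCommGroup E] [NormedSpace ℝ E]

/-- For `f = exp (-F / 2)`, the first-order terms in `∂ᵤ∂ᵥf + (1/2) ∂ᵤF ∂ᵥf` cancel. -/
theorem fderiv_fderiv_exp_neg_half_add {F : E → ℝ} (hF : ContDiff ℝ 2 F) (x u v : E) :
    fderiv ℝ (fun y => fderiv ℝ (fun z => Real.exp (-(F z) / 2)) y v) x u +
        (1 / 2 : ℝ) * fderiv ℝ F x u * fderiv ℝ (fun z => Real.exp (-(F z) / 2)) x v =
      -(1 / 2) * Real.exp (-(F x) / 2) * fderiv ℝ (fun y => fderiv ℝ F y v) x u := by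
  have hd : ∀ y, HasFDerivAt (fun z => Real.exp (-(F z) / 2))
      ((-(1 / 2) * Real.exp (-(F y) / 2)) • fderiv ℝ F y) y := fun y => by
    have h := (((hF.differentiable (by norm_num)) y).hasFDerivAt.const_mul (-(1 / 2 : ℝ))).exp
    convert h using 1
    · ext z; congr 1; ring
    · rw [smul_smul, mul_comm]; congr 3; ring
  have hd' : ∀ y, fderiv ℝ (fun z => Real.exp (-(F z) / 2)) y v =
      -(1 / 2) * Real.exp (-(F y) / 2) * fderiv ℝ F y v := fun y => by
    rw [(hd y).fderiv]; simp
  have hdF : DifferentiableAt ℝ (fun y => fderiv ℝ F y v) x :=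
    (((hF.fderiv_right (m := 1) (by norm_num)).clm_apply contDiff_const).differentiable
      (by norm_num)) x
  have h2 := ((hd x).const_mul (-(1 / 2 : ℝ))).mul hdF.hasFDerivAt
  simp only [hd']
  rw [show (fun y => -(1 / 2) * Real.exp (-(F y) / 2) * fderiv ℝ F y v) =
    (fun y => -(1 / 2) * Real.exp (-(F y) / 2)) * (fun y => fderiv ℝ F y v) from rfl,
    h2.fderiv]
  simp
  ring

/-- The partition function `1 + ∑ wₐ exp (ℓₐ θ)`. -/
noncomputable def onePlusExpSum (s : Finset ι) (w : ι → ℝ) (ℓ : ι → E →L[ℝ] ℝ) (θ : E) : ℝ :=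
  1 + ∑ a ∈ s, w a * Real.exp (ℓ a θ)

variable {s : Finset ι} {w : ι → ℝ} (ℓ : ι → E →L[ℝ] ℝ)

theorem onePlusExpSum_pos (hw : ∀ a, 0 ≤ w a) (θ : E) : 0 < onePlusExpSum s w ℓ θ :=
  add_pos_of_pos_of_nonneg one_pos
    (Finset.sum_nonneg fun a _ => mul_nonneg (hw a) (Real.exp_pos _).le)

theorem contDiff_log_onePlusExpSum (hw : ∀ a, 0 ≤ w a) {n : WithTop ℕ∞} :
    ContDiff ℝ n (fun θ => Real.log (onePlusExpSum s w ℓ θ)) := by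
  refine ContDiff.log ?_ fun θ => (onePlusExpSum_pos ℓ hw θ).ne'
  unfold onePlusExpSum
  exact contDiff_const.add (ContDiff.sum fun a _ => contDiff_const.mul (ℓ a).contDiff.exp)

theorem hasFDerivAt_expSum (s : Finset ι) (w : ι → ℝ) (θ : E) :
    HasFDerivAt (fun θ => ∑ a ∈ s, w a * Real.exp (ℓ a θ))
      (∑ a ∈ s, (w a * Real.exp (ℓ a θ)) • ℓ a) θ := by
  refine HasFDerivAt.fun_sum fun a _ => ?_
  simpa [smul_smul] using ((ℓ a).hasFDerivAt (x := θ)).exp.const_mul (w a)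

theorem fderiv_log_onePlusExpSum (hw : ∀ a, 0 ≤ w a) (θ v : E) :
    fderiv ℝ (fun θ => Real.log (onePlusExpSum s w ℓ θ)) θ v =
      (∑ a ∈ s, w a * ℓ a v * Real.exp (ℓ a θ)) / onePlusExpSum s w ℓ θ := by
  have h : HasFDerivAt (onePlusExpSum s w ℓ) _ θ := (hasFDerivAt_expSum ℓ s w θ).const_add 1
  rw [(h.log (onePlusExpSum_pos ℓ hw θ).ne').fderiv]
  simp only [smul_apply, sum_apply, smul_eq_mul]
  rw [div_eq_inv_mul]
  congr 1
  exact Finset.sum_congr rfl fun a _ => by ring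

/-- The Hessian of a log-partition function is a covariance. -/
theorem fderiv_fderiv_log_onePlusExpSum (hw : ∀ a, 0 ≤ w a) (θ u v : E) :
    fderiv ℝ (fun θ' => fderiv ℝ (fun θ => Real.log (onePlusExpSum s w ℓ θ)) θ' v) θ u =
      (∑ a ∈ s, w a * Real.exp (ℓ a θ) * (ℓ a u * ℓ a v)) / onePlusExpSum s w ℓ θ -
      (∑ a ∈ s, w a * Real.exp (ℓ a θ) * ℓ a u) * (∑ a ∈ s, w a * Real.exp (ℓ a θ) * ℓ a v) /
        onePlusExpSum s w ℓ θ ^ 2 := by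
  have hZ := (onePlusExpSum_pos (s := s) ℓ hw θ).ne'
  have h : HasFDerivAt (onePlusExpSum s w ℓ) _ θ := (hasFDerivAt_expSum ℓ s w θ).const_add 1
  have hN := hasFDerivAt_expSum ℓ s (fun a => w a * ℓ a v) θ
  simp only [fderiv_log_onePlusExpSum ℓ hw]
  simp only [div_eq_mul_inv _ (onePlusExpSum _ _ _ _)]
  have hinv : HasFDerivAt (fun θ => (onePlusExpSum s w ℓ θ)⁻¹) _ θ :=
    (hasDerivAt_inv hZ).comp_hasFDerivAt θ h
  rw [(hN.fun_mul hinv).fderiv]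
  simp only [smul_apply, add_apply, sum_apply, smul_eq_mul]
  have hcov : ∀ a, w a * ℓ a v * Real.exp (ℓ a θ) * ℓ a u =
      w a * Real.exp (ℓ a θ) * (ℓ a u * ℓ a v) := fun a => by ring
  have hmean : ∀ a, w a * ℓ a v * Real.exp (ℓ a θ) = w a * Real.exp (ℓ a θ) * ℓ a v :=
    fun a => by ring
  simp only [hcov]
  simp only [hmean]
  field_simp
  ring

end LogSumExp

section Variance

variable {V ι : Type*} [AddCommGroup V] [Module ℝ V]

/-- Decomposition of the variance of a measure with an extra atom of mass one at the origin. -/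
theorem LinearMap.BilinForm.sum_sub_div_eq (B : LinearMap.BilinForm ℝ V) (s : Finset ι)
    (w : ι → ℝ) (x : ι → V) {Z : ℝ} (hZ : Z = 1 + ∑ a ∈ s, w a) (hZ0 : Z ≠ 0) :
    ∑ a ∈ s, w a * B (x a) (x a) - B (∑ a ∈ s, w a • x a) (∑ a ∈ s, w a • x a) / Z =
      ∑ a ∈ s, w a * B (x a - Z⁻¹ • ∑ b ∈ s, w b • x b) (x a - Z⁻¹ • ∑ b ∈ s, w b • x b) +
        B (Z⁻¹ • ∑ b ∈ s, w b • x b) (Z⁻¹ • ∑ b ∈ s, w b • x b) := by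
  set v := ∑ b ∈ s, w b • x b with hv
  have h1 : ∑ a ∈ s, w a * B (x a) v = B v v := by
    have h := congrArg (fun y => B y v) hv
    simpa only [map_sum, map_smul, LinearMap.sum_apply, LinearMap.smul_apply, smul_eq_mul]
      using h.symm
  have h2 : ∑ a ∈ s, w a * B v (x a) = B v v := by
    have h := congrArg (B v) hv
    simpa only [map_sum, map_smul, smul_eq_mul] using h.symm
  have h3 : ∑ a ∈ s, w a = Z - 1 := by rw [hZ]; ring
  have h4 : ∑ a ∈ s, w a * B (x a - Z⁻¹ • v) (x a - Z⁻¹ • v) =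
      ∑ a ∈ s, w a * B (x a) (x a) - Z⁻¹ * ∑ a ∈ s, w a * B (x a) v -
        Z⁻¹ * ∑ a ∈ s, w a * B v (x a) + (∑ a ∈ s, w a) * (Z⁻¹ * (Z⁻¹ * B v v)) := by
    rw [Finset.mul_sum, Finset.mul_sum, Finset.sum_mul, ← Finset.sum_sub_distrib,
      ← Finset.sum_sub_distrib, ← Finset.sum_add_distrib]
    refine Finset.sum_congr rfl fun a _ => ?_
    simp only [map_sub, map_smul, LinearMap.sub_apply, LinearMap.smul_apply, smul_eq_mul]
    ring
  rw [h4, h1, h2, h3]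
  simp only [map_smul, LinearMap.smul_apply, smul_eq_mul]
  field_simp
  ring

theorem LinearMap.BilinForm.sum_sub_div_nonneg {B : LinearMap.BilinForm ℝ V}
    (hB : ∀ v, 0 ≤ B v v) {s : Finset ι} {w : ι → ℝ} (hw : ∀ a, 0 ≤ w a) (x : ι → V) :
    0 ≤ ∑ a ∈ s, w a * B (x a) (x a) -
      B (∑ a ∈ s, w a • x a) (∑ a ∈ s, w a • x a) / (1 + ∑ a ∈ s, w a) := by
  have hZ : 0 < 1 + ∑ a ∈ s, w a :=
    add_pos_of_pos_of_nonneg one_pos (Finset.sum_nonneg fun a _ => hw a)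
  rw [B.sum_sub_div_eq s w x rfl hZ.ne']
  exact add_nonneg (Finset.sum_nonneg fun a _ => mul_nonneg (hw a) (hB _)) (hB _)

theorem LinearMap.BilinForm.sum_sub_div_pos {B : LinearMap.BilinForm ℝ V}
    (hB : ∀ v, v ≠ 0 → 0 < B v v) {s : Finset ι} {w : ι → ℝ} (hw : ∀ a, 0 < w a) (x : ι → V)
    (hx : ∃ a ∈ s, x a ≠ 0) :
    0 < ∑ a ∈ s, w a * B (x a) (x a) -
      B (∑ a ∈ s, w a • x a) (∑ a ∈ s, w a • x a) / (1 + ∑ a ∈ s, w a) := by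
  have hB' : ∀ v, 0 ≤ B v v := fun v => by
    by_cases h : v = 0
    · simp [h]
    · exact (hB v h).le
  have hZ : 0 < 1 + ∑ a ∈ s, w a :=
    add_pos_of_pos_of_nonneg one_pos (Finset.sum_nonneg fun a _ => (hw a).le)
  by_cases hv : ∑ a ∈ s, w a • x a = 0
  · obtain ⟨a, ha, hxa⟩ := hx
    rw [hv]
    simpa using Finset.sum_pos' (fun a _ => mul_nonneg (hw a).le (hB' (x a)))
      ⟨a, ha, mul_pos (hw a) (hB _ hxa)⟩
  · rw [B.sum_sub_div_eq s w x rfl hZ.ne']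
    exact add_pos_of_nonneg_of_pos
      (Finset.sum_nonneg fun a _ => mul_nonneg (hw a).le (hB' _))
      (hB _ (smul_ne_zero (inv_ne_zero hZ.ne') hv))

end Variance

/-- The trace of the Hessian of a log-partition function against a matrix `M`, as a variance. -/
theorem sum_mul_fderiv_fderiv_log_onePlusExpSum {n ι : Type*} [Fintype n] [DecidableEq n]
    (M : Matrix n n ℝ) {s : Finset ι} {w : ι → ℝ} (hw : ∀ a, 0 ≤ w a)
    (ℓ : ι → (n → ℝ) →L[ℝ] ℝ) (x : ι → n → ℝ) (hx : ∀ a i, ℓ a (Pi.single i 1) = x a i)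
    (θ : n → ℝ) :
    ∑ i, ∑ j, M i j * fderiv ℝ (fun θ' => fderiv ℝ
        (fun θ => Real.log (onePlusExpSum s w ℓ θ)) θ' (Pi.single j 1)) θ (Pi.single i 1) =
      (∑ a ∈ s, w a * Real.exp (ℓ a θ) * Matrix.toBilin' M (x a) (x a) -
        Matrix.toBilin' M (∑ a ∈ s, (w a * Real.exp (ℓ a θ)) • x a)
          (∑ a ∈ s, (w a * Real.exp (ℓ a θ)) • x a) / onePlusExpSum s w ℓ θ) /
        onePlusExpSum s w ℓ θ := by
  have hZ := (onePlusExpSum_pos (s := s) ℓ hw θ).ne'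
  have h1 : ∑ a ∈ s, w a * Real.exp (ℓ a θ) * Matrix.toBilin' M (x a) (x a) =
      ∑ i, ∑ j, M i j * ∑ a ∈ s, w a * Real.exp (ℓ a θ) * (x a i * x a j) := by
    simp only [Matrix.toBilin'_apply, Finset.mul_sum]
    rw [Finset.sum_comm]
    refine Finset.sum_congr rfl fun i _ => ?_
    rw [Finset.sum_comm]
    exact Finset.sum_congr rfl fun j _ => Finset.sum_congr rfl fun a _ => by ring
  rw [h1, Matrix.toBilin'_apply, sub_div, div_div, Finset.sum_div, Finset.sum_div,
    ← Finset.sum_sub_distrib]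
  refine Finset.sum_congr rfl fun i _ => ?_
  rw [Finset.sum_div, Finset.sum_div, ← Finset.sum_sub_distrib]
  refine Finset.sum_congr rfl fun j _ => ?_
  rw [fderiv_fderiv_log_onePlusExpSum ℓ hw]
  simp only [hx, Finset.sum_apply, Pi.smul_apply, smul_eq_mul]
  field_simp

/-- A nonzero tuple of coordinates summing to zero is not constant. -/
theorem exists_ne_of_sum_eq_zero {ι : Type*} [Fintype ι] {g : ι → ℝ} (h0 : ∑ k, g k = 0)
    (hg : g ≠ 0) : ∃ k l, g k ≠ g l := by
  by_contra! h
  obtain ⟨k, hk⟩ := Function.ne_iff.mp hg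
  rw [Finset.sum_congr rfl fun l _ => h l k] at h0
  have : Nonempty ι := ⟨k⟩
  simp_all


/-- Superharmonicity of the shrinkage prior ratio `f = π_S/π_J = exp(-F/2)`:
for the log-linear family `log λ_k(θ) = ∑_i c_i^k θ_i` with `∑_k c_i^k = 0` and
linearly independent rows, `F(θ) = ∑_m log(1 + μ_m(θ))`, and any constant
symmetric positive definite `G` (the `θ`-block of the Fisher metric),
`∑_{i,j} G^{ij}(∂_i∂_j f + (1/2)(∂_i F)(∂_j f)) < 0` everywhere. -/
theorem stmt_14 (p d : ℕ) (hp : 2 ≤ p) (hd : 1 ≤ d) (hdp : d ≤ p)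
    (c : Fin d → Fin p → ℝ)
    (hc0 : ∀ i, ∑ k : Fin p, c i k = 0)
    (hindep : LinearIndependent ℝ c)
    (lam : (Fin d → ℝ) → Fin p → ℝ)
    (hlam : ∀ θ k, lam θ k = Real.exp (∑ i : Fin d, c i k * θ i))
    (F : (Fin d → ℝ) → ℝ)
    (hF : ∀ θ, F θ = ∑ m : Fin p, Real.log (1 + (1 / p : ℝ) *
      ∑ kl ∈ Finset.univ.filter
        (fun kl : Fin p × Fin p => ((kl.1 : ℕ) + (kl.2 : ℕ)) % p = (m : ℕ)),
        lam θ kl.1 * (lam θ kl.2)⁻¹))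
    (G : Matrix (Fin d) (Fin d) ℝ) (hG : G.PosDef)
    (f : (Fin d → ℝ) → ℝ) (hfdef : ∀ θ, f θ = Real.exp (-(F θ) / 2)) :
    ∀ θ : Fin d → ℝ,
      ∑ i : Fin d, ∑ j : Fin d, G⁻¹ i j *
        (fderiv ℝ (fun θ' => fderiv ℝ f θ' (Pi.single j 1)) θ (Pi.single i 1) +
          (1 / 2 : ℝ) * fderiv ℝ F θ (Pi.single i 1) *
            fderiv ℝ f θ (Pi.single j 1)) < 0 := by
  intro θ
  set w : Fin p × Fin p → ℝ := fun _ => 1 / p with hw_def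
  have hw : ∀ a, 0 < w a := fun _ => by
    have : (0 : ℝ) < p := by exact_mod_cast (by omega : 0 < p)
    simp only [hw_def]; positivity
  set x : Fin p × Fin p → Fin d → ℝ := fun a i => c i a.1 - c i a.2 with hx_def
  set ℓ : Fin p × Fin p → (Fin d → ℝ) →L[ℝ] ℝ := fun a =>
    ∑ i, x a i • ContinuousLinearMap.proj i with hℓ_def
  have hℓ : ∀ a θ, ℓ a θ = ∑ i, x a i * θ i := fun a θ => by
    simp [hℓ_def]
  have hℓx : ∀ a i, ℓ a (Pi.single i 1) = x a i := fun a i => by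
    simp [hℓ, Pi.single_apply]
  set s : Fin p → Finset (Fin p × Fin p) := fun m => Finset.univ.filter
    (fun kl : Fin p × Fin p => ((kl.1 : ℕ) + (kl.2 : ℕ)) % p = (m : ℕ)) with hs_def
  have hF' : F = fun θ => ∑ m, Real.log (onePlusExpSum (s m) w ℓ θ) := by
    ext θ
    rw [hF]
    refine Finset.sum_congr rfl fun m _ => ?_
    rw [onePlusExpSum, Finset.mul_sum]
    congr 2
    refine Finset.sum_congr rfl fun a _ => ?_
    rw [hlam, hlam, ← Real.exp_neg, ← Real.exp_add, hℓ]
    simp only [hx_def, hw_def, sub_mul, Finset.sum_sub_distrib, ← sub_eq_add_neg]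
  have hlogC : ∀ m, ContDiff ℝ 2 (fun θ => Real.log (onePlusExpSum (s m) w ℓ θ)) :=
    fun m => contDiff_log_onePlusExpSum ℓ fun a => (hw a).le
  have hFC : ContDiff ℝ 2 F := by
    rw [hF']
    exact ContDiff.sum fun m _ => hlogC m
  obtain rfl : f = fun θ => Real.exp (-(F θ) / 2) := funext hfdef
  simp only [fderiv_fderiv_exp_neg_half_add hFC]
  have hHess : ∀ u v, fderiv ℝ (fun θ' => fderiv ℝ F θ' v) θ u = ∑ m, fderiv ℝ (fun θ' =>
      fderiv ℝ (fun θ => Real.log (onePlusExpSum (s m) w ℓ θ)) θ' v) θ u := fun u v => by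
    have h1 : (fun θ' => fderiv ℝ F θ' v) = fun θ' => ∑ m,
        fderiv ℝ (fun θ => Real.log (onePlusExpSum (s m) w ℓ θ)) θ' v := by
      ext θ'
      rw [hF', fderiv_fun_sum fun m _ => ((hlogC m).differentiable (by norm_num)) θ',
        sum_apply]
    rw [h1, fderiv_fun_sum fun m _ => ?_, sum_apply]
    exact ((((hlogC m).fderiv_right (m := 1) (by norm_num)).clm_apply
      contDiff_const).differentiable (by norm_num)) θ
  have hB : ∀ v, v ≠ 0 → 0 < Matrix.toBilin' G⁻¹ v v := fun v hv => by
    have := hG.inv.dotProduct_mulVec_pos hv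
    rwa [Matrix.toBilin'_apply']
  have hB' : ∀ v, 0 ≤ Matrix.toBilin' G⁻¹ v v := fun v => by
    by_cases h : v = 0
    · simp [h]
    · exact (hB v h).le
  have hwe : ∀ a, 0 < w a * Real.exp (ℓ a θ) := fun a => mul_pos (hw a) (Real.exp_pos _)
  have htrace : ∑ i, ∑ j, G⁻¹ i j *
      fderiv ℝ (fun θ' => fderiv ℝ F θ' (Pi.single j 1)) θ (Pi.single i 1) =
      ∑ m, ∑ i, ∑ j, G⁻¹ i j * fderiv ℝ (fun θ' => fderiv ℝ
        (fun θ => Real.log (onePlusExpSum (s m) w ℓ θ)) θ' (Pi.single j 1)) θ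
          (Pi.single i 1) := by
    simp only [hHess, Finset.mul_sum]
    rw [Finset.sum_comm (s := Finset.univ (α := Fin p))]
    exact Finset.sum_congr rfl fun i _ => Finset.sum_comm
  have hpos : 0 < ∑ i, ∑ j, G⁻¹ i j *
      fderiv ℝ (fun θ' => fderiv ℝ F θ' (Pi.single j 1)) θ (Pi.single i 1) := by
    rw [htrace]
    simp only [sum_mul_fderiv_fderiv_log_onePlusExpSum G⁻¹ (fun a => (hw a).le) ℓ x hℓx]
    have i₀ : Fin d := ⟨0, hd⟩
    obtain ⟨k, l, hkl⟩ := exists_ne_of_sum_eq_zero (hc0 i₀) (hindep.ne_zero i₀)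
    refine Finset.sum_pos' (fun m _ => div_nonneg
      (LinearMap.BilinForm.sum_sub_div_nonneg hB' (fun a => (hwe a).le) x)
      (onePlusExpSum_pos ℓ (fun a => (hw a).le) θ).le)
      ⟨⟨((k : ℕ) + l) % p, Nat.mod_lt _ (by omega)⟩, Finset.mem_univ _, div_pos
        (LinearMap.BilinForm.sum_sub_div_pos hB hwe x ⟨(k, l), by simp [hs_def], ?_⟩)
        (onePlusExpSum_pos ℓ (fun a => (hw a).le) θ)⟩
    exact fun h => hkl (sub_eq_zero.mp (congrFun h i₀))
  have hfactor : ∀ i j, G⁻¹ i j * (-(1 / 2) * Real.exp (-(F θ) / 2) *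
      fderiv ℝ (fun θ' => fderiv ℝ F θ' (Pi.single j 1)) θ (Pi.single i 1)) =
      (-(1 / 2) * Real.exp (-(F θ) / 2)) * (G⁻¹ i j *
        fderiv ℝ (fun θ' => fderiv ℝ F θ' (Pi.single j 1)) θ (Pi.single i 1)) :=
    fun i j => by ring
  simp only [hfactor, ← Finset.mul_sum]
  exact mul_neg_of_neg_of_pos (by have := Real.exp_pos (-(F θ) / 2); linarith) hpos
end

section
/- Let p ≥ 2 and define M(θ) = (p−1) log( (1/p)(2 sinh(pθ/2))² + 2 ) for θ ∈ ℝ. Then M'(θ) = (p−1) · 4 sinh(pθ/2) cosh(pθ/2) / ( (4/p) sinh²(pθ/2) + 2 ), and as θ → ∞, M'(θ) → p(p−1) and M''(θ) → 0. -/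
open Filter

/-- The quotient `4 sinh cosh / ((4 / q) sinh² + 2)` as a rational function of `exp (-qθ)`. -/
lemma four_sinh_mul_cosh_div_eq {q : ℝ} (hq : 0 < q) (θ : ℝ) :
    (q - 1) * (4 * Real.sinh (q * θ / 2) * Real.cosh (q * θ / 2)) /
        ((4 / q) * (Real.sinh (q * θ / 2)) ^ 2 + 2) =
      q * (q - 1) * (1 - Real.exp (-(q * θ)) ^ 2) /
        ((1 - Real.exp (-(q * θ))) ^ 2 + 2 * q * Real.exp (-(q * θ))) := by
  have hexp : Real.exp (-(q * θ)) = Real.exp (-(q * θ / 2)) ^ 2 := by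
    rw [← Real.exp_nat_mul]; congr 1; push_cast; ring
  have hinv : Real.exp (q * θ / 2) * Real.exp (-(q * θ / 2)) = 1 := by
    rw [← Real.exp_add]; simp
  rw [hexp, Real.sinh_eq, Real.cosh_eq]
  have hv : 0 < Real.exp (-(q * θ / 2)) := Real.exp_pos _
  generalize Real.exp (-(q * θ / 2)) = v at *
  rw [show Real.exp (q * θ / 2) = 1 / v by field_simp; linarith]
  have hD : 0 < (4 / q) * ((1 / v - v) / 2) ^ 2 + 2 := by positivity
  have hE : 0 < (1 - v ^ 2) ^ 2 + 2 * q * v ^ 2 := by positivity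
  rw [div_eq_div_iff hD.ne' hE.ne']
  field_simp
  ring

lemma hasDerivAt_log_sinh_sq {q : ℝ} (hq : 0 < q) (θ : ℝ) :
    HasDerivAt (fun θ => (q - 1) * Real.log ((1 / q) * (2 * Real.sinh (q * θ / 2)) ^ 2 + 2))
      ((q - 1) * (4 * Real.sinh (q * θ / 2) * Real.cosh (q * θ / 2)) /
        ((4 / q) * (Real.sinh (q * θ / 2)) ^ 2 + 2)) θ := by
  have hlin : HasDerivAt (fun θ : ℝ => q * θ / 2) (q / 2) θ := by
    simpa using ((hasDerivAt_id θ).const_mul q).div_const 2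
  have hpos : 0 < (1 / q) * (2 * Real.sinh (q * θ / 2)) ^ 2 + 2 := by positivity
  have h := (((((hlin.sinh.const_mul 2).pow 2).const_mul (1 / q)).add_const 2).log
    hpos.ne').const_mul (q - 1)
  refine h.congr_deriv (Eq.symm ?_)
  simp only [Pi.pow_apply]
  have hpos' : 0 < (4 / q) * (Real.sinh (q * θ / 2)) ^ 2 + 2 := by positivity
  rw [← mul_div_assoc, div_eq_div_iff hpos'.ne' hpos.ne']
  field_simp
  push_cast
  ring

lemma tendsto_exp_neg_mul_atTop {q : ℝ} (hq : 0 < q) :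
    Tendsto (fun θ : ℝ => Real.exp (-(q * θ))) atTop (nhds 0) :=
  Real.tendsto_exp_neg_atTop_nhds_zero.comp (tendsto_id.const_mul_atTop hq)

/-- For `M(θ) = (p-1) log((1/p)(2 sinh(pθ/2))² + 2)` (which equals `log |g|` up
to an additive constant in the exchangeable model), one has
`M'(θ) = (p-1)·4 sinh(pθ/2) cosh(pθ/2)/((4/p) sinh²(pθ/2) + 2)`, and as
`θ → ∞`, `M'(θ) → p(p-1)` and `M''(θ) → 0`. -/
theorem stmt_18 (p : ℕ) (hp : 2 ≤ p)
    (M : ℝ → ℝ)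
    (hM : ∀ θ : ℝ, M θ =
      ((p : ℝ) - 1) * Real.log ((1 / p) * (2 * Real.sinh ((p : ℝ) * θ / 2)) ^ 2 + 2)) :
    (∀ θ : ℝ, deriv M θ =
      ((p : ℝ) - 1) * (4 * Real.sinh ((p : ℝ) * θ / 2) * Real.cosh ((p : ℝ) * θ / 2)) /
        ((4 / p) * (Real.sinh ((p : ℝ) * θ / 2)) ^ 2 + 2)) ∧
    Tendsto (deriv M) atTop (nhds ((p : ℝ) * ((p : ℝ) - 1))) ∧
    Tendsto (deriv (deriv M)) atTop (nhds 0) := by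
  have hq : (0 : ℝ) < p := by exact_mod_cast (by lia : 0 < p)
  obtain rfl : M = _ := funext hM
  have hderiv := fun θ => (hasDerivAt_log_sinh_sq hq θ).deriv
  have hform := funext fun θ => (hderiv θ).trans (four_sinh_mul_cosh_div_eq hq θ)
  have hlim := tendsto_exp_neg_mul_atTop hq
  refine ⟨hderiv, ?_, ?_⟩
  · rw [hform]
    have hcont : ContinuousAt (fun u : ℝ => (p : ℝ) * (p - 1) * (1 - u ^ 2) /
        ((1 - u) ^ 2 + 2 * p * u)) 0 :=
      ContinuousAt.div (by fun_prop) (by fun_prop) (by norm_num)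
    simpa [Function.comp_def] using hcont.tendsto.comp hlim
  · rw [hform]
    have hsecond : deriv (fun θ : ℝ => (p : ℝ) * (p - 1) * (1 - Real.exp (-(p * θ)) ^ 2) /
        ((1 - Real.exp (-(p * θ))) ^ 2 + 2 * p * Real.exp (-(p * θ)))) =
        (fun u : ℝ => (p : ℝ) * (p - 1) * (2 * p * u ^ 2 * ((1 - u) ^ 2 + 2 * p * u) -
          (1 - u ^ 2) * (2 * p * u * (1 - u) - 2 * p ^ 2 * u)) /
          ((1 - u) ^ 2 + 2 * p * u) ^ 2) ∘ fun θ => Real.exp (-(p * θ)) := by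
      funext θ
      have hexp : HasDerivAt (fun θ : ℝ => Real.exp (-(p * θ)))
          (Real.exp (-(p * θ)) * -p) θ := by
        simpa using (((hasDerivAt_id θ).const_mul (p : ℝ)).neg).exp
      have hD : 0 < (1 - Real.exp (-(p * θ))) ^ 2 + 2 * p * Real.exp (-(p * θ)) := by
        positivity
      refine ((((hexp.pow 2).const_sub 1).const_mul ((p : ℝ) * (p - 1))).div
        (((hexp.const_sub 1).pow 2).add (hexp.const_mul (2 * (p : ℝ)))) hD.ne').deriv.trans ?_
      simp only [Function.comp_apply, Pi.add_apply, Pi.pow_apply]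
      congr 1
      push_cast
      ring
    rw [hsecond]
    have hcont : ContinuousAt (fun u : ℝ => (p : ℝ) * (p - 1) *
        (2 * p * u ^ 2 * ((1 - u) ^ 2 + 2 * p * u) -
          (1 - u ^ 2) * (2 * p * u * (1 - u) - 2 * p ^ 2 * u)) /
          ((1 - u) ^ 2 + 2 * p * u) ^ 2) 0 :=
      ContinuousAt.div (by fun_prop) (by fun_prop) (by norm_num)
    simpa using hcont.tendsto.comp hlim
end

section
/- (Vanishing Hessian at infinity for the full model) Let p ≥ 2, d = ⌊p/2⌋, and let λ(θ) = (e^{−θ_1−⋯−θ_{p−1}}, e^{θ_1}, …, e^{θ_{p−1}}) with the identification θ_{p−a} = θ_a for 1 ≤ a ≤ ⌊(p−1)/2⌋, so that λ depends on θ = (θ_1,…,θ_d). Define F(θ) = ∑_{m=1}^p log( 1 + μ_m(θ) ) with μ_m(θ) = (1/p) ∑_{(k,l)∈S_m} λ_k(θ) λ_l(θ)^{−1}. Then for any fixed θ_0 ∈ (0,∞)^d, every entry of the Hessian of F satisfies ∂²F/∂θ_i∂θ_j (r θ_0) → 0 as r → ∞. -/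
open Filter Topology

section LogSumExp

variable {E ι κ : Type*} [NormedAddCommGroup E] [NormedSpace ℝ E]

/-- The sum `∑ t ∈ s, c t * f t * exp (L t θ)` of exponentials of linear forms. -/
noncomputable def weightedExpSum (s : Finset ι) (c : ι → ℝ) (L : ι → E →L[ℝ] ℝ) (f : ι → ℝ)
    (θ : E) : ℝ :=
  ∑ t ∈ s, c t * f t * Real.exp (L t θ)

/-- The mean of `f` under the Gibbs weights proportional to `c t * exp (L t θ)`. -/
noncomputable def gibbsMean (s : Finset ι) (c : ι → ℝ) (L : ι → E →L[ℝ] ℝ) (f : ι → ℝ)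
    (θ : E) : ℝ :=
  weightedExpSum s c L f θ / weightedExpSum s c L 1 θ

variable {s : Finset ι} {c : ι → ℝ} {L : ι → E →L[ℝ] ℝ}

theorem weightedExpSum_one_pos (hc : ∀ t ∈ s, 0 < c t) (hs : s.Nonempty) (θ : E) :
    0 < weightedExpSum s c L 1 θ :=
  Finset.sum_pos (fun t ht => by have := hc t ht; simp only [Pi.one_apply]; positivity) hs

theorem hasFDerivAt_weightedExpSum (f : ι → ℝ) (θ : E) :
    HasFDerivAt (weightedExpSum s c L f)
      (∑ t ∈ s, (c t * f t) • Real.exp (L t θ) • L t) θ :=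
  HasFDerivAt.fun_sum fun t _ => ((L t).hasFDerivAt.exp).const_mul (c t * f t)

theorem sum_smul_apply_eq_weightedExpSum (f : ι → ℝ) (θ v : E) :
    (∑ t ∈ s, (c t * f t) • Real.exp (L t θ) • L t) v =
      weightedExpSum s c L (fun t => f t * L t v) θ := by
  simp only [weightedExpSum, FunLike.coe_sum, Finset.sum_apply, FunLike.coe_smul,
    Pi.smul_apply, smul_eq_mul]
  exact Finset.sum_congr rfl fun t _ => by ring

theorem differentiableAt_log_weightedExpSum (hc : ∀ t ∈ s, 0 < c t) (hs : s.Nonempty) (θ : E) :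
    DifferentiableAt ℝ (fun θ => Real.log (weightedExpSum s c L 1 θ)) θ :=
  ((hasFDerivAt_weightedExpSum 1 θ).log (weightedExpSum_one_pos hc hs θ).ne').differentiableAt

theorem fderiv_log_weightedExpSum_apply (hc : ∀ t ∈ s, 0 < c t) (hs : s.Nonempty) (θ v : E) :
    fderiv ℝ (fun θ => Real.log (weightedExpSum s c L 1 θ)) θ v =
      gibbsMean s c L (fun t => L t v) θ := by
  rw [((hasFDerivAt_weightedExpSum 1 θ).log (weightedExpSum_one_pos hc hs θ).ne').fderiv,
    FunLike.coe_smul, Pi.smul_apply, sum_smul_apply_eq_weightedExpSum]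
  simp [gibbsMean, div_eq_inv_mul]

theorem differentiableAt_gibbsMean (hc : ∀ t ∈ s, 0 < c t) (hs : s.Nonempty) (f : ι → ℝ) (θ : E) :
    DifferentiableAt ℝ (gibbsMean s c L f) θ :=
  (hasFDerivAt_weightedExpSum f θ).differentiableAt.mul
    ((hasFDerivAt_weightedExpSum 1 θ).differentiableAt.fun_inv (weightedExpSum_one_pos hc hs θ).ne')

/-- The derivative of a Gibbs mean is a covariance. -/
theorem fderiv_gibbsMean_apply (hc : ∀ t ∈ s, 0 < c t) (hs : s.Nonempty) (f : ι → ℝ) (θ v : E) :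
    fderiv ℝ (gibbsMean s c L f) θ v =
      gibbsMean s c L (fun t => f t * L t v) θ -
        gibbsMean s c L f θ * gibbsMean s c L (fun t => L t v) θ := by
  have hpos := weightedExpSum_one_pos (L := L) hc hs θ
  have h := (hasFDerivAt_weightedExpSum (s := s) (c := c) (L := L) f θ).mul
    ((hasDerivAt_inv hpos.ne').comp_hasFDerivAt θ (hasFDerivAt_weightedExpSum 1 θ))
  have hfderiv : fderiv ℝ (gibbsMean s c L f) θ = _ := h.fderiv
  rw [hfderiv]
  simp only [FunLike.coe_add, Pi.add_apply, Function.comp_apply,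
    FunLike.coe_smul, Pi.smul_apply,
    sum_smul_apply_eq_weightedExpSum, smul_eq_mul, Pi.one_apply, one_mul, gibbsMean]
  field_simp
  ring

/-- Along a ray, Gibbs means concentrate on the maximizers of the linear forms. -/
theorem tendsto_gibbsMean_smul (hc : ∀ t ∈ s, 0 < c t) {t₀ : ι} (ht₀ : t₀ ∈ s) {θ₀ : E}
    {f : ι → ℝ} (h : ∀ t ∈ s, f t = f t₀ ∨ L t θ₀ < L t₀ θ₀) :
    Tendsto (fun r : ℝ => gibbsMean s c L f (r • θ₀)) atTop (𝓝 (f t₀)) := by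
  have key : ∀ r : ℝ, |gibbsMean s c L f (r • θ₀) - f t₀| ≤
      ∑ t ∈ s, c t * |f t - f t₀| / c t₀ * Real.exp (r * (L t θ₀ - L t₀ θ₀)) := by
    intro r
    have hpos := weightedExpSum_one_pos (L := L) hc ⟨t₀, ht₀⟩ (r • θ₀)
    have hc₀ := hc t₀ ht₀
    have hle : c t₀ * Real.exp (L t₀ (r • θ₀)) ≤ weightedExpSum s c L 1 (r • θ₀) := by
      have := Finset.single_le_sum (f := fun t => c t * (1 : ι → ℝ) t * Real.exp (L t (r • θ₀)))
        (fun t ht => by have := hc t ht; simp only [Pi.one_apply]; positivity) ht₀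
      simpa [weightedExpSum] using this
    have heq : gibbsMean s c L f (r • θ₀) - f t₀ =
        (∑ t ∈ s, c t * (f t - f t₀) * Real.exp (L t (r • θ₀))) /
          weightedExpSum s c L 1 (r • θ₀) := by
      rw [gibbsMean, div_sub' hpos.ne']
      congr 1
      simp only [weightedExpSum, Finset.sum_mul, ← Finset.sum_sub_distrib]
      exact Finset.sum_congr rfl fun t _ => by simp only [Pi.one_apply]; ring
    rw [heq, abs_div, abs_of_pos hpos]
    calc _ ≤ (∑ t ∈ s, c t * |f t - f t₀| * Real.exp (L t (r • θ₀))) /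
          (c t₀ * Real.exp (L t₀ (r • θ₀))) := by
          refine div_le_div₀ (Finset.sum_nonneg fun t ht => ?_) ?_ (by positivity) hle
          · have := hc t ht
            positivity
          · refine (Finset.abs_sum_le_sum_abs _ _).trans_eq (Finset.sum_congr rfl fun t ht => ?_)
            rw [abs_mul, abs_mul, abs_of_pos (hc t ht), abs_of_pos (Real.exp_pos _)]
      _ = _ := by
          rw [Finset.sum_div]
          refine Finset.sum_congr rfl fun t _ => ?_
          rw [mul_sub, Real.exp_sub, map_smul, map_smul, smul_eq_mul, smul_eq_mul]
          field_simp
  rw [tendsto_iff_norm_sub_tendsto_zero]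
  refine squeeze_zero (fun _ => norm_nonneg _) key ?_
  rw [← Finset.sum_const_zero (s := s)]
  refine tendsto_finsetSum s fun t ht => ?_
  rcases h t ht with h | h
  · simp [h]
  · have : Tendsto (fun r : ℝ => Real.exp (r * (L t θ₀ - L t₀ θ₀))) atTop (𝓝 0) :=
      Real.tendsto_exp_atBot.comp (tendsto_id.atTop_mul_const_of_neg (sub_neg.2 h))
    simpa using this.const_mul (c t * |f t - f t₀| / c t₀)

/-- The Hessian of a sum of log-sum-exp functions vanishes at infinity along `θ₀` as soon as, in
each summand, all linear forms that are maximal at `θ₀` coincide. -/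
theorem tendsto_hessian_sum_log_weightedExpSum [Fintype κ] {s : κ → Finset ι}
    (hc : ∀ m, ∀ t ∈ s m, 0 < c t) {θ₀ : E}
    (h : ∀ m, ∃ t₀ ∈ s m, ∀ t ∈ s m, L t = L t₀ ∨ L t θ₀ < L t₀ θ₀) (v w : E) :
    Tendsto (fun r : ℝ => fderiv ℝ (fun θ => fderiv ℝ
      (fun θ => ∑ m, Real.log (weightedExpSum (s m) c L 1 θ)) θ v) (r • θ₀) w) atTop (𝓝 0) := by
  have hs : ∀ m, (s m).Nonempty := fun m => let ⟨t, ht, _⟩ := h m; ⟨t, ht⟩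
  have hgrad : (fun θ => fderiv ℝ
      (fun θ => ∑ m, Real.log (weightedExpSum (s m) c L 1 θ)) θ v) =
      fun θ => ∑ m, gibbsMean (s m) c L (fun t => L t v) θ := by
    funext θ
    rw [fderiv_fun_sum fun m _ => differentiableAt_log_weightedExpSum (hc m) (hs m) θ,
      FunLike.coe_sum, Finset.sum_apply]
    exact Finset.sum_congr rfl fun m _ => fderiv_log_weightedExpSum_apply (hc m) (hs m) θ v
  have hhess : ∀ θ, fderiv ℝ (fun θ => ∑ m, gibbsMean (s m) c L (fun t => L t v) θ) θ w =
      ∑ m, (gibbsMean (s m) c L (fun t => L t v * L t w) θ -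
        gibbsMean (s m) c L (fun t => L t v) θ * gibbsMean (s m) c L (fun t => L t w) θ) := by
    intro θ
    rw [fderiv_fun_sum fun m _ => differentiableAt_gibbsMean (hc m) (hs m) _ θ,
      FunLike.coe_sum, Finset.sum_apply]
    exact Finset.sum_congr rfl fun m _ => fderiv_gibbsMean_apply (hc m) (hs m) _ θ w
  rw [hgrad]
  simp only [hhess]
  rw [← Finset.sum_const_zero (s := (Finset.univ : Finset κ))]
  refine tendsto_finsetSum _ fun m _ => ?_
  obtain ⟨t₀, ht₀, hmax⟩ := h m
  have hlim : ∀ g : (E →L[ℝ] ℝ) → ℝ,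
      Tendsto (fun r : ℝ => gibbsMean (s m) c L (fun t => g (L t)) (r • θ₀)) atTop
        (𝓝 (g (L t₀))) := fun g =>
    tendsto_gibbsMean_smul (f := fun t => g (L t)) (hc m) ht₀ fun t ht =>
      (hmax t ht).imp_left (congrArg g)
  simpa using (hlim fun l => l v * l w).sub ((hlim fun l => l v).mul (hlim fun l => l w))

end LogSumExp

section CirculantModel

theorem circulantParam_lt {p : ℕ} (k : Fin p) (hk : 1 ≤ (k : ℕ)) :
    min (k : ℕ) (p - (k : ℕ)) - 1 < p / 2 := by
  have := k.isLt
  omega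

/-- The position `min (k, p - k) - 1` of the parameter attached to the eigenvalue index `k ≠ 0`. -/
def circulantParam {p : ℕ} (k : Fin p) (hk : 1 ≤ (k : ℕ)) : Fin (p / 2) :=
  ⟨min (k : ℕ) (p - (k : ℕ)) - 1, circulantParam_lt k hk⟩

/-- The logarithm of the `k`-th eigenvalue, as a linear form in the parameters. -/
noncomputable def circulantLogEigenvalue (p : ℕ) (k : Fin p) : (Fin (p / 2) → ℝ) →L[ℝ] ℝ :=
  if hk : 1 ≤ (k : ℕ) then ContinuousLinearMap.proj (circulantParam k hk)
  else -∑ a : Fin (p - 1), ContinuousLinearMap.proj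
    (circulantParam (p := p) ⟨(a : ℕ) + 1, by have := a.isLt; omega⟩ (by simp))

variable {p : ℕ}

theorem circulantLogEigenvalue_pos {θ : Fin (p / 2) → ℝ} (hθ : ∀ i, 0 < θ i) {k : Fin p}
    (hk : 1 ≤ (k : ℕ)) : 0 < circulantLogEigenvalue p k θ := by
  simp [circulantLogEigenvalue, hk, hθ]

theorem circulantLogEigenvalue_le_neg_zero {θ : Fin (p / 2) → ℝ} (hθ : ∀ i, 0 < θ i)
    {k z : Fin p} (hk : 1 ≤ (k : ℕ)) (hz : (z : ℕ) = 0) :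
    circulantLogEigenvalue p k θ ≤ -circulantLogEigenvalue p z θ := by
  have hk' := k.isLt
  have := Finset.single_le_sum (f := fun a : Fin (p - 1) => θ (circulantParam (p := p)
    ⟨(a : ℕ) + 1, by have := a.isLt; omega⟩ (by simp))) (fun a _ => (hθ _).le)
    (Finset.mem_univ (⟨(k : ℕ) - 1, by omega⟩ : Fin (p - 1)))
  have hidx : (⟨(k : ℕ) - 1 + 1, by omega⟩ : Fin p) = k := Fin.ext (by simp; omega)
  simp only [hidx] at this
  simpa [circulantLogEigenvalue, hk, hz] using this

theorem circulantLogEigenvalue_eq_of_add_mod {k l : Fin p} (h : ((k : ℕ) + l) % p = 0) :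
    circulantLogEigenvalue p k = circulantLogEigenvalue p l := by
  have hk := k.isLt
  have hl := l.isLt
  obtain ⟨q, hq⟩ := Nat.dvd_of_mod_eq_zero h
  have hq2 : q < 2 := by
    by_contra! hcon
    have := Nat.mul_le_mul_left p hcon
    omega
  interval_cases q
  · rw [show k = l from Fin.ext (by omega)]
  · have hk1 : 1 ≤ (k : ℕ) := by omega
    have hl1 : 1 ≤ (l : ℕ) := by omega
    simp only [circulantLogEigenvalue, hk1, hl1, dif_pos]
    congr 1
    simp only [circulantParam, Fin.mk.injEq]
    omega

/-- The linear form of the eigenvalue ratio `λ_k / λ_l`, and `0` for the constant term. -/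
noncomputable def circulantLogRatio (p : ℕ) :
    Option (Fin p × Fin p) → (Fin (p / 2) → ℝ) →L[ℝ] ℝ
  | none => 0
  | some kl => circulantLogEigenvalue p kl.1 - circulantLogEigenvalue p kl.2

/-- The pairs `(k, l)` with `k + l ≡ m (mod p)`. -/
def circulantPairs (m : Fin p) : Finset (Fin p × Fin p) :=
  Finset.univ.filter (fun kl : Fin p × Fin p => ((kl.1 : ℕ) + (kl.2 : ℕ)) % p = (m : ℕ))

theorem circulantLogRatio_dominated {θ : Fin (p / 2) → ℝ} (hθ : ∀ i, 0 < θ i) (m : Fin p) :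
    ∃ t₀ ∈ (circulantPairs m).insertNone, ∀ t ∈ (circulantPairs m).insertNone,
      circulantLogRatio p t = circulantLogRatio p t₀ ∨
        circulantLogRatio p t θ < circulantLogRatio p t₀ θ := by
  have hm := m.isLt
  rcases Nat.eq_zero_or_pos (m : ℕ) with hm0 | hm1
  · refine ⟨none, Finset.none_mem_insertNone, fun t ht => Or.inl ?_⟩
    rcases t with _ | ⟨k, l⟩
    · rfl
    · have hkl : ((k : ℕ) + l) % p = m := by simpa [circulantPairs] using ht
      simp [circulantLogRatio, circulantLogEigenvalue_eq_of_add_mod (hkl.trans hm0)]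
  · let z : Fin p := ⟨0, by omega⟩
    have hz : (z : ℕ) = 0 := rfl
    have hψm := circulantLogEigenvalue_pos hθ hm1
    have hψz := circulantLogEigenvalue_le_neg_zero hθ hm1 hz
    refine ⟨some (m, z), by simp [circulantPairs, z, Nat.mod_eq_of_lt hm], fun t ht => ?_⟩
    rcases t with _ | ⟨k, l⟩
    · right
      simp only [circulantLogRatio, zero_apply, sub_apply]
      linarith
    · have hkl : ((k : ℕ) + l) % p = m := by simpa [circulantPairs] using ht
      have hk := k.isLt
      rcases Nat.eq_zero_or_pos (l : ℕ) with hl0 | hl1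
      · left
        rw [hl0, add_zero, Nat.mod_eq_of_lt hk] at hkl
        rw [show k = m from Fin.ext hkl, show l = z from Fin.ext hl0]
      · right
        have hψl := circulantLogEigenvalue_pos hθ hl1
        simp only [circulantLogRatio, sub_apply]
        rcases Nat.eq_zero_or_pos (k : ℕ) with hk0 | hk1
        · rw [show k = z from Fin.ext hk0]
          linarith
        · have := circulantLogEigenvalue_le_neg_zero hθ hk1 hz
          linarith

end CirculantModel

/-- Vanishing Hessian at infinity for the full model: with `d = ⌊p/2⌋`,
`λ(θ) = (e^{-θ_1-⋯-θ_{p-1}}, e^{θ_1}, …, e^{θ_{p-1}})` under the identification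
`θ_{p-a} = θ_a`, and `F(θ) = ∑_m log(1 + μ_m(θ))`, every entry of the Hessian of
`F` tends to `0` along the ray `r θ₀`, `r → ∞`, for any fixed positive `θ₀`.
(Indices are written 0-based, so the 1-based eigenvalue index `a+1` becomes `a`,
and the 1-based parameter index `min(a, p-a)` becomes `min(a, p-a) - 1`.) -/
theorem stmt_19 (p : ℕ) (hp : 2 ≤ p)
    (lam : (Fin (p / 2) → ℝ) → Fin p → ℝ)
    (hlam0 : ∀ θ, lam θ ⟨0, by omega⟩ =
      Real.exp (-∑ a : Fin (p - 1),
        θ ⟨min ((a : ℕ) + 1) (p - ((a : ℕ) + 1)) - 1, by have := a.isLt; omega⟩))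
    (hlamk : ∀ θ (k : Fin p) (hk : 1 ≤ (k : ℕ)),
      lam θ k = Real.exp (θ ⟨min (k : ℕ) (p - (k : ℕ)) - 1, by have := k.isLt; omega⟩))
    (F : (Fin (p / 2) → ℝ) → ℝ)
    (hF : ∀ θ, F θ = ∑ m : Fin p, Real.log (1 + (1 / p : ℝ) *
      ∑ kl ∈ Finset.univ.filter
        (fun kl : Fin p × Fin p => ((kl.1 : ℕ) + (kl.2 : ℕ)) % p = (m : ℕ)),
        lam θ kl.1 * (lam θ kl.2)⁻¹)) :
    ∀ θ₀ : Fin (p / 2) → ℝ, (∀ i, 0 < θ₀ i) → ∀ i j : Fin (p / 2),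
      Tendsto
        (fun r : ℝ =>
          fderiv ℝ (fun θ => fderiv ℝ F θ (Pi.single j 1)) (r • θ₀) (Pi.single i 1))
        atTop (nhds 0) := by
  intro θ₀ hθ₀ i j
  have hlam : ∀ θ k, lam θ k = Real.exp (circulantLogEigenvalue p k θ) := by
    intro θ k
    by_cases hk : 1 ≤ (k : ℕ)
    · rw [hlamk θ k hk]
      simp [circulantLogEigenvalue, hk, circulantParam]
    · rw [show k = ⟨0, by omega⟩ from Fin.ext (by simp; omega), hlam0]
      simp [circulantLogEigenvalue, circulantParam]
  let c : Option (Fin p × Fin p) → ℝ := fun t => t.elim 1 fun _ => 1 / p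
  have hc : ∀ t, 0 < c t := by
    rintro (_ | _)
    · exact one_pos
    · exact one_div_pos.2 (by exact_mod_cast (by omega : 0 < p))
  have hF' : F = fun θ => ∑ m : Fin p, Real.log
      (weightedExpSum (circulantPairs m).insertNone c (circulantLogRatio p) 1 θ) := by
    funext θ
    rw [hF]
    refine Finset.sum_congr rfl fun m _ => ?_
    simp [weightedExpSum, Finset.sum_insertNone, circulantPairs, circulantLogRatio, c, hlam,
      Real.exp_sub, div_eq_mul_inv, Finset.mul_sum]
  rw [hF']
  exact tendsto_hessian_sum_log_weightedExpSum (fun _ t _ => hc t)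
    (circulantLogRatio_dominated hθ₀) _ _
end
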